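/- Let d ≥ 2 and r ≥ 1 be integers, and let W be the class of functions f : ℝ^d → ℝ that are 2π-periodic in each variable and such that all partial derivatives D^α f with multi-index α ∈ {0,1,…,r}^d exist, are continuous, and satisfy sup_x |D^α f(x)| ≤ 1. Then there is a constant c(r,d) > 0 such that for every m ≥ 1, Θ_m(W, L_1[−π,π]^d) ≥ c(r,d) m^{−rd/(d−1)}. -/

import Mathlib

open MeasureTheory

/-- Partial derivative in direction `i`. -/
noncomputable def pderm (d : ℕ) (i : Fin d) (f : (Fin d → ℝ) → ℝ) : (Fin d → ℝ) → ℝ :=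
  fun x => fderiv ℝ f x (Pi.single i 1)

/-- Iterated partial derivative along a list of coordinates. -/
noncomputable def iterPD (d : ℕ) : List (Fin d) → ((Fin d → ℝ) → ℝ) → (Fin d → ℝ) → ℝ
  | [], f => f
  | i :: L, f => pderm d i (iterPD d L f)

/-- The class `W` of functions `2π`-periodic in each variable whose mixed partial
derivatives `D^α f`, `α ∈ {0,…,r}^d`, exist, are continuous, and are bounded by `1`. -/
def Wmix (d r : ℕ) : Set ((Fin d → ℝ) → ℝ) :=
  {f | (∀ (x : Fin d → ℝ) (i : Fin d),
          f (Function.update x i (x i + 2 * Real.pi)) = f x) ∧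
    ∀ L : List (Fin d), (∀ i, L.count i ≤ r) →
      Continuous (iterPD d L f) ∧ (∀ x, |iterPD d L f x| ≤ 1) ∧
      ((∃ i, L.count i < r) → Differentiable ℝ (iterPD d L f))}

/-- The error of best `m`-term approximation of `f` by sums of tensor products, in
`L₁(μ)`. -/
noncomputable def theta1 (d m : ℕ) (μ : Measure (Fin d → ℝ)) (f : (Fin d → ℝ) → ℝ) :
    ℝ :=
  sInf {r : ℝ | ∃ u : Fin m → Fin d → ℝ → ℝ,
    (∀ s i, Measurable (u s i)) ∧
    Integrable (fun x : Fin d → ℝ => ∑ s, ∏ i, u s i (x i)) μ ∧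
    r = ∫ x, |f x - ∑ s, ∏ i, u s i (x i)| ∂μ}

lemma aux_finrank {ι : Type*} [Fintype ι] (V : Submodule ℝ (EuclideanSpace ℝ ι)) (κ : ℝ)
    (h : ∀ i, ∃ v ∈ V, v ≠ 0 ∧ κ * ‖v‖ ^ 2 ≤ (v i) ^ 2) :
    κ * Fintype.card ι ≤ Module.finrank ℝ V := by
  classical
  set b := stdOrthonormalBasis ℝ V with hb
  have h1 : ∀ i, κ ≤ ∑ j, ((b j : EuclideanSpace ℝ ι) i) ^ 2 := by
    intro i
    obtain ⟨v, hv, hv0, hk⟩ := h i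
    have hn : 0 < ‖v‖ ^ 2 := by positivity
    have hrep : v i = ∑ j, b.repr ⟨v, hv⟩ j * (b j : EuclideanSpace ℝ ι) i := by
      have := congrArg (fun w : V => (w : EuclideanSpace ℝ ι) i) (b.sum_repr ⟨v, hv⟩)
      simp only [Submodule.coe_sum, Submodule.coe_smul] at this
      rw [← this]
      simp
    have hnorm : ‖v‖ ^ 2 = ∑ j, (b.repr ⟨v, hv⟩ j) ^ 2 := by
      have h3 : ‖b.repr ⟨v, hv⟩‖ = ‖v‖ := by
        rw [LinearIsometryEquiv.norm_map]; rfl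
      rw [← h3, EuclideanSpace.norm_sq_eq]
      simp
    have hcs := Finset.sum_mul_sq_le_sq_mul_sq Finset.univ (fun j => b.repr ⟨v, hv⟩ j)
      (fun j => (b j : EuclideanSpace ℝ ι) i)
    rw [← hrep, ← hnorm] at hcs
    have : ‖v‖ ^ 2 * κ ≤ ‖v‖ ^ 2 * ∑ j, ((b j : EuclideanSpace ℝ ι) i) ^ 2 := by linarith
    exact le_of_mul_le_mul_left this hn
  have h2 : ∑ i, ∑ j, ((b j : EuclideanSpace ℝ ι) i) ^ 2 = Module.finrank ℝ V := by
    rw [Finset.sum_comm]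
    have : ∀ j, ∑ i, ((b j : EuclideanSpace ℝ ι) i) ^ 2 = 1 := by
      intro j
      have h4 : ‖(b j : EuclideanSpace ℝ ι)‖ = 1 := b.norm_eq_one j
      have := EuclideanSpace.norm_sq_eq (b j : EuclideanSpace ℝ ι)
      rw [h4] at this
      simpa using this.symm
    simp [this]
  have h3 := Finset.sum_le_sum (fun i (_ : i ∈ Finset.univ) => h1 i)
  rw [h2] at h3
  simpa [mul_comm] using h3

lemma aux_dim {σ ι : Type*} [Fintype σ] [Fintype ι] (G : ι → MvPolynomial σ ℝ) (E : ℕ)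
    (hG : ∀ i, (G i).totalDegree ≤ E) (x : ℝ) (hx0 : 0 < x) (hx1 : x < 1) :
    (Module.finrank ℝ (Submodule.span ℝ (Set.range fun u : σ → ℝ =>
      (WithLp.toLp 2 fun i => MvPolynomial.eval u (G i) : EuclideanSpace ℝ ι))) : ℝ) * x ^ E
      ≤ (1 / (1 - x)) ^ Fintype.card σ := by
  classical
  let S : Finset (σ → ℕ) := (Fintype.piFinset fun _ : σ => Finset.range (E + 1)).filter
    (fun a => ∑ i, a i ≤ E)
  let c : (σ → ℕ) → EuclideanSpace ℝ ι := fun a =>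
    WithLp.toLp 2 fun i => (G i).coeff (Finsupp.equivFunOnFinite.symm a)
  have hle : Submodule.span ℝ (Set.range fun u : σ → ℝ =>
      (WithLp.toLp 2 fun i => MvPolynomial.eval u (G i) : EuclideanSpace ℝ ι)) ≤
      Submodule.span ℝ ((S.image c : Finset _) : Set (EuclideanSpace ℝ ι)) := by
    rw [Submodule.span_le]
    rintro _ ⟨u, rfl⟩
    have : (WithLp.toLp 2 fun i => MvPolynomial.eval u (G i) : EuclideanSpace ℝ ι) =
        ∑ a ∈ S, (∏ i, u i ^ a i) • c a := by
      ext i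
      simp only [WithLp.ofLp_sum, WithLp.ofLp_smul, Finset.sum_apply, Pi.smul_apply, smul_eq_mul, c]
      rw [MvPolynomial.eval_eq']
      have hinj : ∀ a ∈ (G i).support, (a : σ → ℕ) ∈ S := by
        intro a ha
        have h1 := MvPolynomial.le_totalDegree ha
        have h2 : ∑ j, a j ≤ E := by
          rw [Finsupp.sum_fintype _ _ (by simp)] at h1
          exact h1.trans (hG i)
        simp only [S, Finset.mem_filter, Fintype.mem_piFinset, Finset.mem_range]
        refine ⟨fun j => ?_, h2⟩
        have := Finset.single_le_sum (f := fun j => a j) (fun _ _ => Nat.zero_le _) (Finset.mem_univ j)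
        have h3 : a j ≤ ∑ j, a j := this
        omega
      rw [← Finset.sum_subset (s₁ := (G i).support.image (fun a : σ →₀ ℕ => (a : σ → ℕ))) (s₂ := S)]
      · rw [Finset.sum_image (by intro a _ b _ h; exact DFunLike.coe_injective h)]
        refine Finset.sum_congr rfl fun a _ => ?_
        have : Finsupp.equivFunOnFinite.symm (a : σ → ℕ) = a := by ext; simp
        rw [this, mul_comm]
      · intro a ha
        obtain ⟨b, hb, rfl⟩ := Finset.mem_image.1 ha
        exact hinj b hb
      · intro a _ ha
        have : Finsupp.equivFunOnFinite.symm a ∉ (G i).support := by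
          intro hh
          exact ha (Finset.mem_image.2 ⟨_, hh, by ext; simp⟩)
        rw [MvPolynomial.notMem_support_iff.1 this, mul_zero]
    simp only [SetLike.mem_coe]
    rw [this]
    refine Submodule.sum_mem _ fun a ha => Submodule.smul_mem _ _ (Submodule.subset_span ?_)
    simp only [Finset.coe_image, Set.mem_image, SetLike.mem_coe]
    exact ⟨a, ha, rfl⟩
  have h1 : Module.finrank ℝ (Submodule.span ℝ (Set.range fun u : σ → ℝ =>
      (WithLp.toLp 2 fun i => MvPolynomial.eval u (G i) : EuclideanSpace ℝ ι))) ≤ S.card :=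
    (Submodule.finrank_mono hle).trans ((finrank_span_finset_le_card _).trans Finset.card_image_le)
  have h2 : (S.card : ℝ) * x ^ E ≤ ∑ a ∈ S, ∏ i, x ^ a i := by
    rw [← nsmul_eq_mul]
    refine Finset.card_nsmul_le_sum _ _ _ fun a ha => ?_
    rw [Finset.prod_pow_eq_pow_sum]
    exact pow_le_pow_of_le_one hx0.le hx1.le (Finset.mem_filter.1 ha).2
  have h3 : ∑ a ∈ S, ∏ i, x ^ a i ≤ ∑ a ∈ Fintype.piFinset (fun _ : σ => Finset.range (E + 1)),
      ∏ i, x ^ a i :=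
    Finset.sum_le_sum_of_subset_of_nonneg (Finset.filter_subset _ _)
      (fun _ _ _ => by positivity)
  have h4 : ∑ a ∈ Fintype.piFinset (fun _ : σ => Finset.range (E + 1)),
      ∏ i, x ^ a i = (∑ j ∈ Finset.range (E + 1), x ^ j) ^ Fintype.card σ := by
    rw [← Finset.prod_univ_sum]
    simp
  have h5 : ∑ j ∈ Finset.range (E + 1), x ^ j ≤ 1 / (1 - x) := by
    rw [geom_sum_eq hx1.ne, ← neg_div_neg_eq, neg_sub, neg_sub]
    have : 0 < 1 - x := by linarith
    gcongr
    have := pow_pos hx0 (E + 1)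
    linarith
  calc _ ≤ (S.card : ℝ) * x ^ E := by gcongr
    _ ≤ _ := h2
    _ ≤ _ := h3
    _ = _ := h4
    _ ≤ _ := by gcongr

lemma aux_scalar (s : ℝ) : ((1 + s) ^ 2 + 1) ^ 2 + ((1 - s) ^ 2 + 1) ^ 2 ≤
    ((6 / 5) * Real.exp (8 * |s - 1|)) * ((1 + s) ^ 2 + 1) ^ 2 := by
  by_cases h : |s - 1| ≤ 1 / 2
  · have h1 : 1 ≤ Real.exp (8 * |s - 1|) := Real.one_le_exp (by positivity)
    have h2 := abs_le.1 h
    have ha : (13 / 4 : ℝ) ≤ (1 + s) ^ 2 + 1 := by nlinarith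
    have hb : (1 - s) ^ 2 + 1 ≤ (5 / 4 : ℝ) := by nlinarith
    have hb0 : 0 ≤ (1 - s) ^ 2 + 1 := by positivity
    have hc : ((1 - s) ^ 2 + 1) ^ 2 ≤ (1 / 5) * ((1 + s) ^ 2 + 1) ^ 2 := by nlinarith
    have hd : 0 ≤ ((1 + s) ^ 2 + 1) ^ 2 := by positivity
    nlinarith
  · push Not at h
    have h1 : (32 : ℝ) ≤ Real.exp (8 * |s - 1|) := by
      have : Real.exp 4 ≤ Real.exp (8 * |s - 1|) := Real.exp_le_exp.2 (by linarith)
      refine le_trans ?_ this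
      have e1 : (2.7 : ℝ) ≤ Real.exp 1 := by linarith [Real.exp_one_gt_d9]
      have : Real.exp 4 = Real.exp 1 ^ 4 := by rw [← Real.exp_nat_mul]; norm_num
      rw [this]
      calc (32 : ℝ) ≤ 2.7 ^ 4 := by norm_num
        _ ≤ _ := by gcongr
    have hq : (1 - s) ^ 2 + 1 ≤ 6 * ((1 + s) ^ 2 + 1) := by nlinarith [sq_nonneg (5 * s + 7)]
    have hc : ((1 - s) ^ 2 + 1) ^ 2 ≤ 36 * ((1 + s) ^ 2 + 1) ^ 2 := by
      calc _ ≤ (6 * ((1 + s) ^ 2 + 1)) ^ 2 := by gcongr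
        _ = _ := by ring
    have hd : 0 ≤ ((1 + s) ^ 2 + 1) ^ 2 := by positivity
    nlinarith

lemma aux_signs {K σ : Type*} [Fintype K] [Fintype σ] (F : K → MvPolynomial σ ℝ) (D : ℕ)
    (hF : ∀ k, (F k).totalDegree ≤ D) (x : ℝ) (hx0 : 0 < x) (hx1 : x < 1)
    (hc : (1 / (1 - x)) ^ Fintype.card σ <
      (4 / 3 : ℝ) ^ Fintype.card K * x ^ (Fintype.card K * (2 * D))) :
    ∃ e : K → ℝ, (∀ k, |e k| = 1) ∧ ∀ u : σ → ℝ,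
      (Fintype.card K : ℝ) / 40 ≤ ∑ k, |e k - MvPolynomial.eval u (F k)| := by
  classical
  by_contra hcon
  push Not at hcon
  let sg : Bool → ℝ := fun b => if b then 1 else -1
  have hsg : ∀ b, |sg b| = 1 := by intro b; cases b <;> simp [sg]
  have hsg2 : ∀ b, sg b * sg b = 1 := by intro b; cases b <;> simp [sg]
  let G : (K → Bool) → MvPolynomial σ ℝ := fun η =>
    ∏ k, ((1 + MvPolynomial.C (sg (η k)) * F k) ^ 2 + 1)
  have hG : ∀ η, (G η).totalDegree ≤ Fintype.card K * (2 * D) := by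
    intro η
    refine (MvPolynomial.totalDegree_finsetProd _ _).trans ?_
    rw [← smul_eq_mul, ← Finset.card_univ]
    refine Finset.sum_le_card_nsmul _ _ _ fun k _ => ?_
    refine (MvPolynomial.totalDegree_add _ _).trans (max_le ?_ (by simp))
    refine (MvPolynomial.totalDegree_pow _ _).trans (Nat.mul_le_mul_left _ ?_)
    refine (MvPolynomial.totalDegree_add _ _).trans (max_le (by simp) ?_)
    refine (MvPolynomial.totalDegree_mul _ _).trans ?_
    simpa using hF k
  have hdim := aux_dim G _ hG x hx0 hx1
  have hev : ∀ u η, MvPolynomial.eval u (G η) =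
      ∏ k, ((1 + sg (η k) * MvPolynomial.eval u (F k)) ^ 2 + 1) := by
    intro u η
    simp [G]
  have hfin := aux_finrank (Submodule.span ℝ (Set.range fun u : σ → ℝ =>
      (WithLp.toLp 2 fun i => MvPolynomial.eval u (G i) : EuclideanSpace ℝ (K → Bool))))
      ((2 / 3) ^ Fintype.card K) (by
    intro η
    obtain ⟨u, hu⟩ := hcon (fun k => sg (η k)) (fun k => hsg _)
    refine ⟨_, Submodule.subset_span ⟨u, rfl⟩, ?_, ?_⟩
    · intro h0
      have := congrArg (fun w : EuclideanSpace ℝ (K → Bool) => w η) h0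
      simp only [hev] at this
      have hp : 0 < ∏ k, ((1 + sg (η k) * MvPolynomial.eval u (F k)) ^ 2 + 1) :=
        Finset.prod_pos fun k _ => by positivity
      exact hp.ne' this
    · rw [EuclideanSpace.norm_sq_eq]
      simp only [hev, Real.norm_eq_abs, sq_abs]
      set T : K → ℝ := fun k => MvPolynomial.eval u (F k) with hT
      have e1 : ∑ η' : K → Bool, (∏ k, ((1 + sg (η' k) * T k) ^ 2 + 1)) ^ 2 =
          ∏ k, (((1 + sg (η k) * T k) ^ 2 + 1) ^ 2 + ((1 - sg (η k) * T k) ^ 2 + 1) ^ 2) := by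
        have := Finset.prod_univ_sum (fun _ : K => (Finset.univ : Finset Bool))
          (fun k b => ((1 + sg b * T k) ^ 2 + 1) ^ 2)
        rw [Fintype.piFinset_univ] at this
        simp only [← Finset.prod_pow]
        rw [← this]
        refine Finset.prod_congr rfl fun k _ => ?_
        cases η k <;> simp [sg] <;> ring
      have e2 : ∏ k, (((1 + sg (η k) * T k) ^ 2 + 1) ^ 2 + ((1 - sg (η k) * T k) ^ 2 + 1) ^ 2) ≤
          ∏ k, (((6 / 5) * Real.exp (8 * |sg (η k) * T k - 1|)) *
            ((1 + sg (η k) * T k) ^ 2 + 1) ^ 2) :=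
        Finset.prod_le_prod (fun k _ => by positivity) (fun k _ => aux_scalar _)
      have e3 : ∏ k, ((6 / 5) * Real.exp (8 * |sg (η k) * T k - 1|)) ≤
          (3 / 2 : ℝ) ^ Fintype.card K := by
        rw [Finset.prod_mul_distrib, ← Real.exp_sum, ← Finset.mul_sum]
        have : ∑ k, |sg (η k) * T k - 1| = ∑ k, |sg (η k) - T k| := by
          refine Finset.sum_congr rfl fun k _ => ?_
          cases η k <;> simp [sg]
          · congr 1; ring
          · rw [abs_sub_comm]
        rw [this]
        have h15 : Real.exp (1 / 5) ≤ 5 / 4 := by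
          have h := Real.add_one_le_exp (-(1 / 5 : ℝ))
          rw [Real.exp_neg] at h
          have hp := Real.exp_pos (1 / 5 : ℝ)
          have h' : (4 / 5 : ℝ) ≤ (Real.exp (1 / 5))⁻¹ := by linarith
          rw [le_inv_comm₀ (by norm_num) hp] at h'
          linarith
        have : Real.exp (8 * ∑ k, |sg (η k) - T k|) ≤ (5 / 4 : ℝ) ^ Fintype.card K := by
          calc _ ≤ Real.exp (Fintype.card K * (1 / 5 : ℝ)) := Real.exp_le_exp.2 (by linarith)
            _ = Real.exp (1 / 5) ^ Fintype.card K := by rw [Real.exp_nat_mul]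
            _ ≤ _ := by gcongr
        simp only [Finset.prod_const, Finset.card_univ]
        calc _ ≤ (6 / 5 : ℝ) ^ Fintype.card K * (5 / 4 : ℝ) ^ Fintype.card K := by gcongr
          _ = _ := by rw [← mul_pow]; norm_num
      rw [Finset.prod_mul_distrib] at e2
      rw [e1]
      have hpp : (0:ℝ) ≤ ∏ k, ((1 + sg (η k) * T k) ^ 2 + 1) ^ 2 := by positivity
      calc _ ≤ (2 / 3 : ℝ) ^ Fintype.card K * ((3 / 2 : ℝ) ^ Fintype.card K *
            ∏ k, ((1 + sg (η k) * T k) ^ 2 + 1) ^ 2) := by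
              gcongr
              exact e2.trans (mul_le_mul_of_nonneg_right e3 hpp)
        _ = _ := by
          rw [← mul_assoc, ← mul_pow, Finset.prod_pow]
          norm_num [hT])
  have hcard : ((2 / 3 : ℝ) ^ Fintype.card K) * (Fintype.card (K → Bool) : ℕ) =
      (4 / 3 : ℝ) ^ Fintype.card K := by
    simp only [Fintype.card_fun, Fintype.card_bool]
    push_cast
    rw [← mul_pow]; norm_num
  rw [hcard] at hfin
  have := mul_le_mul_of_nonneg_right hfin (pow_nonneg hx0.le (Fintype.card K * (2 * D)))
  linarith

lemma aux_tensor (d : ℕ) (hd : 2 ≤ d) : ∃ Q : ℕ, 1 ≤ Q ∧ ∀ (n m : ℕ) [NeZero n], 1 ≤ m →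
    Q * d * m ≤ n ^ (d - 1) → ∃ e : (Fin d → ZMod n) → ℝ, (∀ k, |e k| = 1) ∧
      ∀ u : Fin m → Fin d → ZMod n → ℝ,
        ((n : ℝ) ^ d) / 40 ≤ ∑ k, |e k - ∑ s, ∏ i, u s i (k i)| := by
  obtain ⟨Q, hQ⟩ := pow_unbounded_of_one_lt (10 * (d : ℝ)) (show (1 : ℝ) < 16 / 15 by norm_num)
  have hd1 : (2 : ℝ) ≤ d := by exact_mod_cast hd
  have hQ1 : 1 ≤ Q := by
    rcases Nat.eq_zero_or_pos Q with h | h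
    · subst h; simp at hQ; linarith
    · exact h
  refine ⟨Q, hQ1, fun n m _ hm hn => ?_⟩
  let σ := Fin m × Fin d × ZMod n
  let F : (Fin d → ZMod n) → MvPolynomial σ ℝ := fun k =>
    ∑ s, ∏ i, MvPolynomial.X (s, i, k i)
  have hF : ∀ k, (F k).totalDegree ≤ d := by
    intro k
    refine MvPolynomial.totalDegree_finsetSum_le fun s _ => ?_
    refine (MvPolynomial.totalDegree_finsetProd _ _).trans ?_
    simp
  have hcσ : Fintype.card σ = m * (d * n) := by simp [σ, ZMod.card]
  have hcK : Fintype.card (Fin d → ZMod n) = n ^ d := by simp [ZMod.card]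
  have hn0 : 0 < n := Nat.pos_of_ne_zero (NeZero.ne n)
  have hx0 : (0 : ℝ) < 1 - 1 / (10 * d) := by
    rw [sub_pos, div_lt_one (by linarith)]; linarith
  have hx1 : (1 : ℝ) - 1 / (10 * d) < 1 := by
    have : (0 : ℝ) < 1 / (10 * d) := by positivity
    linarith
  obtain ⟨e, he, hu⟩ := aux_signs F d hF (1 - 1 / (10 * d)) hx0 hx1 (by
    rw [hcσ, hcK]
    have hb : (4 / 5 : ℝ) ≤ (1 - 1 / (10 * d)) ^ (2 * d) := by
      have h := one_add_mul_le_pow (a := -(1 / (10 * (d : ℝ)))) (by linarith) (2 * d)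
      rw [← sub_eq_add_neg] at h
      refine le_trans ?_ h
      push_cast
      have : (2 * (d : ℝ)) * -(1 / (10 * d)) = - (1 / 5) := by field_simp; norm_num
      rw [this]; norm_num
    have h1 : (1 / (1 - (1 - 1 / (10 * (d : ℝ))))) = 10 * d := by
      rw [sub_sub_cancel]; field_simp
    rw [h1]
    have hM : m * (d * n) ≠ 0 := by positivity
    calc (10 * (d : ℝ)) ^ (m * (d * n)) < ((16 / 15 : ℝ) ^ Q) ^ (m * (d * n)) :=
          pow_lt_pow_left₀ hQ (by positivity) hM
      _ = (16 / 15 : ℝ) ^ (Q * (m * (d * n))) := (pow_mul _ _ _).symm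
      _ ≤ (16 / 15 : ℝ) ^ (n ^ d) := by
          refine pow_le_pow_right₀ (by norm_num) ?_
          calc Q * (m * (d * n)) = (Q * d * m) * n := by ring
            _ ≤ n ^ (d - 1) * n := Nat.mul_le_mul_right _ hn
            _ = n ^ d := by rw [← pow_succ]; congr 1; omega
      _ = (4 / 3 : ℝ) ^ (n ^ d) * (4 / 5 : ℝ) ^ (n ^ d) := by rw [← mul_pow]; norm_num
      _ ≤ _ := by
          rw [mul_comm (n ^ d) (2 * d), pow_mul (1 - 1 / (10 * (d : ℝ)))]
          gcongr)
  refine ⟨e, he, fun u => ?_⟩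
  have := hu (fun p => u p.1 p.2.1 p.2.2)
  rw [hcK] at this
  simpa [F] using this

lemma aux_tensor_scaled {d n m : ℕ} [NeZero n] (hd : 2 ≤ d) (e : (Fin d → ZMod n) → ℝ)
    (he : ∀ u : Fin m → Fin d → ZMod n → ℝ,
        ((n : ℝ) ^ d) / 40 ≤ ∑ k, |e k - ∑ s, ∏ i, u s i (k i)|) (a : ℝ) (ha : 0 < a)
    (u : Fin m → Fin d → ZMod n → ℝ) :
    a * ((n : ℝ) ^ d / 40) ≤ ∑ k, |a * e k - ∑ s, ∏ i, u s i (k i)| := by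
  have h := he (fun s i x => (if i = (⟨0, by omega⟩ : Fin d) then a⁻¹ else 1) * u s i x)
  simp only [Finset.prod_mul_distrib, Finset.prod_ite_eq', Finset.mem_univ, if_true] at h
  calc _ ≤ a * _ := mul_le_mul_of_nonneg_left h ha.le
    _ = _ := by
      rw [Finset.mul_sum]
      refine Finset.sum_congr rfl fun k _ => ?_
      rw [← Finset.mul_sum]
      nth_rw 1 [← abs_of_pos ha]
      rw [← abs_mul]
      congr 1
      field_simp

noncomputable def PhiB (t : ℝ) : ℝ := expNegInvGlue (-Real.cos t)

lemma PhiB_contDiff (k : ℕ∞) : ContDiff ℝ k PhiB :=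
  expNegInvGlue.contDiff.comp (Real.contDiff_cos.neg)

lemma PhiB_bound (r : ℕ) : ∃ B : ℝ, 1 ≤ B ∧ ∀ k ≤ r, ∀ t, |iteratedDeriv k PhiB t| ≤ B := by
  have h1 : ∀ k, ∃ B : ℝ, ∀ t, |iteratedDeriv k PhiB t| ≤ B := by
    intro k
    have hp : Function.Periodic (iteratedDeriv k PhiB) (2 * Real.pi) := by
      intro t
      have h := iteratedDeriv_comp_add_const k PhiB (2 * Real.pi)
      have h2 : (fun z => PhiB (z + 2 * Real.pi)) = PhiB := by
        funext z; simp [PhiB]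
      rw [h2] at h
      exact (congrFun h t).symm
    have hc : Continuous (iteratedDeriv k PhiB) :=
      (PhiB_contDiff k).continuous_iteratedDeriv k le_rfl
    obtain ⟨B, hB⟩ := (hp.isBounded_of_continuous (by positivity) hc).exists_norm_le
    exact ⟨B, fun t => hB _ ⟨t, rfl⟩⟩
  choose B hB using h1
  refine ⟨1 + ∑ k ∈ Finset.range (r + 1), |B k|, ?_, ?_⟩
  · have : 0 ≤ ∑ k ∈ Finset.range (r + 1), |B k| := Finset.sum_nonneg fun _ _ => abs_nonneg _
    linarith
  · intro k hk t
    have := Finset.single_le_sum (f := fun k => |B k|) (fun _ _ => abs_nonneg _)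
      (Finset.mem_range.2 (Nat.lt_succ_of_le hk))
    have h2 := hB k t
    have h3 := le_abs_self (B k)
    have h4 : |B k| ≤ ∑ k ∈ Finset.range (r + 1), |B k| := this
    linarith

lemma iterPD_prod {d : ℕ} (g : Fin d → ℝ → ℝ) (hg : ∀ i, ContDiff ℝ (⊤ : ℕ∞) (g i))
    (L : List (Fin d)) :
    iterPD d L (fun x => ∏ i, g i (x i)) =
      fun x => ∏ i, iteratedDeriv (L.count i) (g i) (x i) := by
  induction L with
  | nil => simp [iterPD]
  | cons a L ih =>
    simp only [iterPD, ih]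
    funext x
    unfold pderm
    have hdiff : ∀ i, Differentiable ℝ (iteratedDeriv (L.count i) (g i)) := fun i =>
      (hg i).differentiable_iteratedDeriv _ (by exact_mod_cast WithTop.coe_lt_top _)
    have h1 : ∀ i ∈ (Finset.univ : Finset (Fin d)),
        HasFDerivAt (fun x : Fin d → ℝ => iteratedDeriv (L.count i) (g i) (x i))
        ((deriv (iteratedDeriv (L.count i) (g i)) (x i)) •
          (ContinuousLinearMap.proj i : (Fin d → ℝ) →L[ℝ] ℝ)) x := by
      intro i _
      exact ((hdiff i (x i)).hasDerivAt).comp_hasFDerivAt x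
        (ContinuousLinearMap.proj (R := ℝ) (φ := fun _ : Fin d => ℝ) i).hasFDerivAt
    rw [(HasFDerivAt.finsetProd h1).fderiv]
    simp only [sum_apply, smul_apply,
      ContinuousLinearMap.proj_apply, smul_eq_mul]
    rw [Finset.sum_eq_single a]
    · rw [← Finset.prod_erase_mul _ _ (Finset.mem_univ a)]
      simp only [Pi.single_eq_same, mul_one, List.count_cons_self, iteratedDeriv_succ]
      congr 1
      refine Finset.prod_congr rfl fun i hi => ?_
      rw [List.count_cons_of_ne (Finset.ne_of_mem_erase hi).symm]
    · intro b _ hb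
      simp [Pi.single_eq_of_ne hb]
    · simp

lemma iterPD_local {d : ℕ} (L : List (Fin d)) {f F : (Fin d → ℝ) → ℝ} {x : Fin d → ℝ} {σ : ℝ}
    (h : f =ᶠ[nhds x] fun y => σ * F y) :
    iterPD d L f =ᶠ[nhds x] fun y => σ * iterPD d L F y := by
  induction L with
  | nil => simpa [iterPD] using h
  | cons a L ih =>
    filter_upwards [ih.eventuallyEq_nhds] with y hy
    simp only [iterPD, pderm]
    rw [hy.fderiv_eq]
    have : (fun y => σ * iterPD d L F y) = σ • iterPD d L F := rfl
    rw [this, fderiv_const_smul_field]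
    simp

lemma mem_Wmix_of_local {d r : ℕ} (f F : (Fin d → ℝ) → ℝ)
    (hper : ∀ (x : Fin d → ℝ) (i : Fin d), f (Function.update x i (x i + 2 * Real.pi)) = f x)
    (hloc : ∀ x, ∃ σ : ℝ, |σ| ≤ 1 ∧ f =ᶠ[nhds x] fun y => σ * F y)
    (hF : ∀ L : List (Fin d), Differentiable ℝ (iterPD d L F))
    (hb : ∀ L : List (Fin d), (∀ i, L.count i ≤ r) → ∀ x, |iterPD d L F x| ≤ 1) :
    f ∈ Wmix d r := by
  refine ⟨hper, fun L hL => ?_⟩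
  have hd : Differentiable ℝ (iterPD d L f) := by
    intro x
    obtain ⟨σ, _, h⟩ := hloc x
    exact ((hF L x).const_mul σ).congr_of_eventuallyEq (iterPD_local L h)
  refine ⟨hd.continuous, fun x => ?_, fun _ => hd⟩
  obtain ⟨σ, hσ, h⟩ := hloc x
  rw [(iterPD_local L h).eq_of_nhds, abs_mul]
  exact mul_le_one₀ hσ (abs_nonneg _) (hb L hL x)

noncomputable def idxB (n : ℕ) (t : ℝ) : ZMod n := ((⌊(n : ℝ) * (t + Real.pi) / (2 * Real.pi)⌋ : ℤ) : ZMod n)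

noncomputable def baseF (d n : ℕ) (A : ℝ) (x : Fin d → ℝ) : ℝ :=
  A * ∏ i, PhiB ((n : ℝ) * (x i + Real.pi))

noncomputable def testF (d n : ℕ) (A : ℝ) (e : (Fin d → ZMod n) → ℝ) (x : Fin d → ℝ) : ℝ :=
  e (fun i => idxB n (x i)) * baseF d n A x

lemma testF_per (d n : ℕ) [NeZero n] (A : ℝ) (e : (Fin d → ZMod n) → ℝ) (x : Fin d → ℝ) (i : Fin d) :
    testF d n A e (Function.update x i (x i + 2 * Real.pi)) = testF d n A e x := by
  have hn : (n : ℝ) ≠ 0 := by exact_mod_cast NeZero.ne n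
  have h1 : ∀ j, idxB n (Function.update x i (x i + 2 * Real.pi) j) = idxB n (x j) := by
    intro j
    by_cases h : j = i
    · subst h
      simp only [Function.update_self, idxB]
      have : (n : ℝ) * (x j + 2 * Real.pi + Real.pi) / (2 * Real.pi) =
          (n : ℝ) * (x j + Real.pi) / (2 * Real.pi) + (n : ℤ) := by
        push_cast
        field_simp
        ring
      rw [this, Int.floor_add_intCast]
      simp
    · simp [Function.update_of_ne h]
  have h2 : ∀ j, PhiB (n * (Function.update x i (x i + 2 * Real.pi) j + Real.pi)) =
      PhiB (n * (x j + Real.pi)) := by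
    intro j
    by_cases h : j = i
    · subst h
      simp only [Function.update_self, PhiB]
      have : (n : ℝ) * (x j + 2 * Real.pi + Real.pi) = n * (x j + Real.pi) + n * (2 * Real.pi) := by
        ring
      rw [this, Real.cos_add_nat_mul_two_pi]
    · simp [Function.update_of_ne h]
  simp only [testF, baseF, h1, h2]

lemma testF_local (d n : ℕ) [NeZero n] (A : ℝ) (e : (Fin d → ZMod n) → ℝ) (he : ∀ k, |e k| = 1)
    (x : Fin d → ℝ) :
    ∃ σ : ℝ, |σ| ≤ 1 ∧ testF d n A e =ᶠ[nhds x] fun y => σ * baseF d n A y := by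
  have hn : (n : ℝ) ≠ 0 := by exact_mod_cast NeZero.ne n
  by_cases h : ∃ i, 0 < Real.cos (n * (x i + Real.pi))
  · obtain ⟨i, hi⟩ := h
    refine ⟨0, by simp, ?_⟩
    have hc : Continuous fun y : Fin d → ℝ => Real.cos (n * (y i + Real.pi)) := by fun_prop
    filter_upwards [hc.continuousAt.eventually (lt_mem_nhds hi)] with y hy
    have : PhiB (n * (y i + Real.pi)) = 0 := expNegInvGlue.zero_of_nonpos (by linarith)
    simp only [testF, baseF]
    rw [Finset.prod_eq_zero (Finset.mem_univ i) this]
    simp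
  · push Not at h
    refine ⟨e (fun i => idxB n (x i)), (he _).le, ?_⟩
    have hev : ∀ i, ∀ᶠ y in nhds x, idxB n (y i) = idxB n (x i) := by
      intro i
      set q : ℝ := (n : ℝ) * (x i + Real.pi) / (2 * Real.pi) with hq
      have hc : Continuous fun y : Fin d → ℝ => (n : ℝ) * (y i + Real.pi) / (2 * Real.pi) := by
        fun_prop
      have h1 : (⌊q⌋ : ℝ) < q := by
        refine lt_of_le_of_ne (Int.floor_le q) fun hh => ?_
        have h3 := h i
        have h4 : (n : ℝ) * (x i + Real.pi) = ⌊q⌋ * (2 * Real.pi) := by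
          rw [hh, hq]; field_simp
        rw [h4, Real.cos_int_mul_two_pi] at h3
        linarith
      filter_upwards [hc.continuousAt.eventually (lt_mem_nhds (b := q) h1),
        hc.continuousAt.eventually (Iio_mem_nhds (show (n : ℝ) * (x i + Real.pi) / (2 * Real.pi) < (⌊q⌋ : ℝ) + 1 from Int.lt_floor_add_one q))] with y hy1 hy2
      unfold idxB
      congr 1
      rw [Int.floor_eq_iff]
      exact ⟨hy1.le, hy2⟩
    filter_upwards [Filter.eventually_all.2 hev] with y hy
    simp only [testF, hy]

lemma testF_mem (d r n : ℕ) [NeZero n] (B : ℝ) (hB : 1 ≤ B)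
    (hBr : ∀ k ≤ r, ∀ t, |iteratedDeriv k PhiB t| ≤ B)
    (e : (Fin d → ZMod n) → ℝ) (he : ∀ k, |e k| = 1) :
    testF d n ((B ^ d)⁻¹ * ((n : ℝ) ^ (r * d))⁻¹) e ∈ Wmix d r := by
  have hn1 : (1 : ℝ) ≤ n := by exact_mod_cast Nat.pos_of_ne_zero (NeZero.ne n)
  set A := ((B ^ d)⁻¹ * ((n : ℝ) ^ (r * d))⁻¹) with hA
  have hA0 : 0 < A := by positivity
  clear_value A
  let g : ℝ → ℝ := fun t => PhiB (n * (t + Real.pi))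
  have hg : ContDiff ℝ (⊤ : ℕ∞) g := (PhiB_contDiff ⊤).comp (by fun_prop)
  have hgk : ∀ k t, iteratedDeriv k g t = (n : ℝ) ^ k * iteratedDeriv k PhiB (n * (t + Real.pi)) := by
    intro k t
    have h1 := iteratedDeriv_comp_add_const k (fun t => PhiB (n * t)) Real.pi
    have h2 := iteratedDeriv_comp_const_mul (n := k) (PhiB_contDiff k) (n : ℝ)
    have h3 := congrFun h1 t
    rw [h2] at h3
    exact h3
  have hit : ∀ L, iterPD d L (baseF d n A) =
      fun x => A * ∏ i, iteratedDeriv (L.count i) g (x i) := by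
    intro L
    funext x
    have h := iterPD_local L (f := baseF d n A) (F := fun x => ∏ i, g (x i)) (x := x) (σ := A)
      (Filter.Eventually.of_forall fun y => rfl)
    rw [h.eq_of_nhds, iterPD_prod (fun _ => g) (fun _ => hg)]
  refine mem_Wmix_of_local _ (baseF d n A) (testF_per d n A e) (testF_local d n A e he) ?_ ?_
  · intro L
    rw [hit]
    have hdiff : ∀ k, Differentiable ℝ (iteratedDeriv k g) := fun i =>
      hg.differentiable_iteratedDeriv _ (by exact_mod_cast WithTop.coe_lt_top _)
    refine Differentiable.const_mul (fun x => ?_) _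
    exact (HasFDerivAt.finsetProd
      (g := fun (i : Fin d) (x : Fin d → ℝ) => iteratedDeriv (List.count i L) g (x i)) fun i _ =>
      (((hdiff (List.count i L)).comp (differentiable_apply i)) x).hasFDerivAt).differentiableAt
  · intro L hL x
    rw [hit]
    simp only [hgk, Finset.prod_mul_distrib]
    rw [abs_mul A, abs_mul, Finset.abs_prod, Finset.abs_prod]
    have hp1 : ∏ i, |(n : ℝ) ^ L.count i| ≤ (n : ℝ) ^ (r * d) := by
      calc ∏ i, |(n : ℝ) ^ L.count i| ≤ ∏ i : Fin d, (n : ℝ) ^ r := by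
            refine Finset.prod_le_prod (fun _ _ => abs_nonneg _) fun i _ => ?_
            rw [abs_of_nonneg (by positivity)]
            exact pow_le_pow_right₀ hn1 (hL i)
        _ = _ := by simp [pow_mul]
    have hp2 : ∏ i, |iteratedDeriv (L.count i) PhiB (n * (x i + Real.pi))| ≤ B ^ d := by
      calc _ ≤ ∏ i : Fin d, B :=
            Finset.prod_le_prod (fun _ _ => abs_nonneg _) fun i _ => hBr _ (hL i) _
        _ = _ := by simp
    rw [abs_of_pos hA0]
    calc _ ≤ A * ((n : ℝ) ^ (r * d) * B ^ d) := by
          gcongr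
      _ = 1 := by rw [hA]; field_simp

noncomputable def tauB (n : ℕ) (j : ZMod n) : ℝ := 2 * Real.pi * j.val / n

noncomputable def loB (n : ℕ) : ℝ := -Real.pi + 2 * Real.pi / (3 * n)
noncomputable def hiB (n : ℕ) : ℝ := -Real.pi + 4 * Real.pi / (3 * n)

lemma idxB_shift (n : ℕ) [NeZero n] (j : ZMod n) (s : ℝ) (h1 : loB n ≤ s) (h2 : s ≤ hiB n) :
    idxB n (s + tauB n j) = j := by
  have hn : (0 : ℝ) < n := by exact_mod_cast Nat.pos_of_ne_zero (NeZero.ne n)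
  have hpi := Real.pi_pos
  unfold idxB
  have hfl : ⌊(n : ℝ) * (s + tauB n j + Real.pi) / (2 * Real.pi)⌋ = (j.val : ℤ) := by
    have e : (n : ℝ) * (s + tauB n j + Real.pi) / (2 * Real.pi) =
        n * (s + Real.pi) / (2 * Real.pi) + j.val := by
      unfold tauB; field_simp; ring
    have g1 : 0 ≤ n * (s + Real.pi) / (2 * Real.pi) := by
      have : 0 ≤ s + Real.pi := by
        have : 0 ≤ 2 * Real.pi / (3 * n) := by positivity
        unfold loB at h1; linarith
      positivity
    have g2 : n * (s + Real.pi) / (2 * Real.pi) < 1 := by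
      have : s + Real.pi ≤ 4 * Real.pi / (3 * n) := by unfold hiB at h2; linarith
      rw [div_lt_one (by positivity)]
      calc n * (s + Real.pi) ≤ n * (4 * Real.pi / (3 * n)) := by gcongr
        _ = 4 / 3 * Real.pi := by field_simp
        _ < _ := by linarith
    rw [e, Int.floor_eq_iff]
    push_cast
    constructor <;> linarith
  rw [hfl]
  simp

lemma PhiB_shift (n : ℕ) [NeZero n] (j : ZMod n) (s : ℝ) :
    PhiB (n * (s + tauB n j + Real.pi)) = PhiB (n * (s + Real.pi)) := by
  have hn : (n : ℝ) ≠ 0 := by exact_mod_cast NeZero.ne n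
  have : (n : ℝ) * (s + tauB n j + Real.pi) = n * (s + Real.pi) + (j.val : ℕ) * (2 * Real.pi) := by
    unfold tauB; field_simp; ring
  unfold PhiB
  rw [this, Real.cos_add_nat_mul_two_pi]

lemma PhiB_lower (n : ℕ) [NeZero n] (s : ℝ) (h1 : loB n ≤ s) (h2 : s ≤ hiB n) :
    expNegInvGlue (1 / 2) ≤ PhiB (n * (s + Real.pi)) := by
  have hn : (0 : ℝ) < n := by exact_mod_cast Nat.pos_of_ne_zero (NeZero.ne n)
  have hpi := Real.pi_pos
  refine expNegInvGlue.monotone ?_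
  set w : ℝ := n * (s + Real.pi) with hw
  have g1 : 2 * Real.pi / 3 ≤ w := by
    have : 2 * Real.pi / (3 * n) ≤ s + Real.pi := by unfold loB at h1; linarith
    calc 2 * Real.pi / 3 = n * (2 * Real.pi / (3 * n)) := by field_simp
      _ ≤ w := by rw [hw]; gcongr
  have g2 : w ≤ 4 * Real.pi / 3 := by
    have : s + Real.pi ≤ 4 * Real.pi / (3 * n) := by unfold hiB at h2; linarith
    calc w ≤ n * (4 * Real.pi / (3 * n)) := by rw [hw]; gcongr
      _ = _ := by field_simp
  have e : -Real.cos w = Real.cos |w - Real.pi| := by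
    rw [Real.cos_abs, Real.cos_sub_pi]
  rw [e, ← Real.cos_pi_div_three]
  have : |w - Real.pi| ≤ Real.pi / 3 := abs_le.2 ⟨by linarith, by linarith⟩
  exact Real.cos_le_cos_of_nonneg_of_le_pi (abs_nonneg _) (by linarith) this

lemma aux_integral (d n : ℕ) [NeZero n] (h : (Fin d → ℝ) → ℝ) (h0 : ∀ x, 0 ≤ h x)
    (hint : IntegrableOn h (Set.univ.pi fun _ => Set.Icc (-Real.pi) Real.pi)) (c : ℝ)
    (hc : ∀ t : Fin d → ℝ, (∀ i, loB n ≤ t i ∧ t i ≤ hiB n) →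
      c ≤ ∑ k : Fin d → ZMod n, h (t + fun i => tauB n (k i))) :
    c * (2 * Real.pi / (3 * n)) ^ d ≤
      ∫ x in (Set.univ.pi fun _ => Set.Icc (-Real.pi) Real.pi), h x := by
  have hn : (0 : ℝ) < n := by exact_mod_cast Nat.pos_of_ne_zero (NeZero.ne n)
  have hpi := Real.pi_pos
  let sub0 : Set (Fin d → ℝ) := Set.Icc (fun _ => loB n) (fun _ => hiB n)
  let cell : (Fin d → ZMod n) → Set (Fin d → ℝ) := fun k =>
    Set.Icc (fun i => loB n + tauB n (k i)) (fun i => hiB n + tauB n (k i))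
  have hpre : ∀ k : Fin d → ZMod n, (fun x : Fin d → ℝ => x + fun i => tauB n (k i)) ⁻¹' cell k = sub0 := by
    intro k
    ext x
    simp [cell, sub0, Pi.le_def]
  have htau0 : ∀ j : ZMod n, 0 ≤ tauB n j := fun j => by unfold tauB; positivity
  have htau1 : ∀ j : ZMod n, hiB n + tauB n j ≤ Real.pi := by
    intro j
    have h1 : (j.val : ℝ) + 1 ≤ n := by exact_mod_cast ZMod.val_lt j
    have h2 : 4 * Real.pi / (3 * n) ≤ 2 * Real.pi / n := by
      rw [div_le_div_iff₀ (by positivity) hn]; nlinarith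
    have h3 : 2 * Real.pi / n + tauB n j ≤ 2 * Real.pi := by
      unfold tauB
      rw [← add_div, div_le_iff₀ hn]
      nlinarith
    unfold hiB
    linarith
  have hlo : -Real.pi ≤ loB n := by
    have : 0 ≤ 2 * Real.pi / (3 * n) := by positivity
    unfold loB; linarith
  have hcell : ∀ k, cell k ⊆ Set.univ.pi fun _ => Set.Icc (-Real.pi) Real.pi := by
    intro k x hx i _
    exact ⟨by linarith [hx.1 i, htau0 (k i)], by linarith [hx.2 i, htau1 (k i)]⟩
  have hidx : ∀ k, ∀ x ∈ cell k, ∀ i, idxB n (x i) = k i := by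
    intro k x hx i
    have h1 := hx.1 i
    have h2 := hx.2 i
    have := idxB_shift n (k i) (x i - tauB n (k i)) (by linarith) (by linarith)
    simpa using this
  have hdisj : Pairwise (Function.onFun Disjoint cell) := by
    intro k k' hkk
    rw [Function.onFun, Set.disjoint_left]
    intro x hx hx'
    exact hkk (funext fun i => (hidx k x hx i).symm.trans (hidx k' x hx' i))
  have hmeas : ∀ k, MeasurableSet (cell k) := fun k => measurableSet_Icc
  have hi : ∀ k, IntegrableOn h (cell k) := fun k => hint.mono_set (hcell k)
  have hmp : ∀ k : Fin d → ZMod n, MeasurePreserving (fun x : Fin d → ℝ => x + fun i => tauB n (k i)) volume volume :=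
    fun k => measurePreserving_add_right volume _
  have hemb : ∀ k : Fin d → ZMod n, MeasurableEmbedding (fun x : Fin d → ℝ => x + fun i => tauB n (k i)) :=
    fun k => measurableEmbedding_addRight _
  have hi0 : ∀ k : Fin d → ZMod n, IntegrableOn (fun x => h (x + fun i => tauB n (k i))) sub0 := by
    intro k
    rw [← hpre k]
    exact ((hmp k).integrableOn_comp_preimage (hemb k)).2 (hi k)
  have hvol : volume.real sub0 = (2 * Real.pi / (3 * n)) ^ d := by
    simp only [Measure.real, sub0]
    rw [Real.volume_Icc_pi_toReal]
    · simp only [Finset.prod_const, Finset.card_univ, Fintype.card_fin]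
      congr 1
      unfold loB hiB
      ring
    · intro i
      have : 2 * Real.pi / (3 * n) ≤ 4 * Real.pi / (3 * n) := by gcongr; linarith
      simp only [loB, hiB]
      linarith
  calc c * (2 * Real.pi / (3 * n)) ^ d = ∫ x in sub0, c := by
        rw [setIntegral_const, hvol, smul_eq_mul, mul_comm]
    _ ≤ ∫ x in sub0, ∑ k : Fin d → ZMod n, h (x + fun i => tauB n (k i)) := by
        refine setIntegral_mono_on ?_ ?_ measurableSet_Icc ?_
        · exact integrableOn_const (by simpa [sub0] using isCompact_Icc.measure_lt_top.ne) (by simp)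
        · exact integrable_finsetSum _ fun k _ => hi0 k
        · intro x hx
          exact hc x fun i => ⟨hx.1 i, hx.2 i⟩
    _ = ∑ k : Fin d → ZMod n, ∫ x in sub0, h (x + fun i => tauB n (k i)) :=
        integral_finsetSum _ fun k _ => hi0 k
    _ = ∑ k : Fin d → ZMod n, ∫ x in cell k, h x := by
        refine Finset.sum_congr rfl fun k _ => ?_
        rw [← hpre k]
        exact (hmp k).setIntegral_preimage_emb (hemb k) h (cell k)
    _ = ∫ x in ⋃ k, cell k, h x := (integral_iUnion_fintype hmeas hdisj hi).symm
    _ ≤ _ := by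
        refine setIntegral_mono_set hint (Filter.Eventually.of_forall h0) ?_
        exact (Set.iUnion_subset hcell).eventuallyLE

lemma Wmix_integrable {d r : ℕ} {f : (Fin d → ℝ) → ℝ} (hf : f ∈ Wmix d r) :
    IntegrableOn f (Set.univ.pi fun _ => Set.Icc (-Real.pi) Real.pi) := by
  have hc : Continuous f := (hf.2 [] (by simp)).1
  exact hc.continuousOn.integrableOn_compact (isCompact_univ_pi fun _ => isCompact_Icc)

lemma theta1_le {d r m : ℕ} (hm : 1 ≤ d) {f : (Fin d → ℝ) → ℝ} (hf : f ∈ Wmix d r) :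
    theta1 d m (volume.restrict (Set.univ.pi fun _ => Set.Icc (-Real.pi) Real.pi)) f ≤
      volume.real (Set.univ.pi fun _ : Fin d => Set.Icc (-Real.pi) Real.pi) := by
  have hz : (∑ _s : Fin m, ∏ _i : Fin d, (0 : ℝ)) = 0 := by
    have : Nonempty (Fin d) := ⟨⟨0, hm⟩⟩
    simp; omega
  have h1 : theta1 d m (volume.restrict (Set.univ.pi fun _ => Set.Icc (-Real.pi) Real.pi)) f ≤
      ∫ x in (Set.univ.pi fun _ => Set.Icc (-Real.pi) Real.pi), |f x| := by
    refine csInf_le ⟨0, ?_⟩ ⟨fun _ _ _ => 0, fun _ _ => measurable_const, ?_, ?_⟩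
    · rintro _ ⟨u, _, _, rfl⟩
      exact integral_nonneg fun _ => abs_nonneg _
    · simp only [hz]; exact integrable_zero (Fin d → ℝ) ℝ _
    · simp only [hz, sub_zero]
  refine h1.trans ?_
  have hfin : volume (Set.univ.pi fun _ : Fin d => Set.Icc (-Real.pi) Real.pi) < ⊤ :=
    (isCompact_univ_pi fun _ => isCompact_Icc).measure_lt_top
  have := norm_setIntegral_le_of_norm_le_const (f := fun x => |f x|) (C := 1) hfin (fun x _ => by
    simpa [iterPD] using (hf.2 [] (by simp)).2.1 x)
  rw [one_mul] at this
  exact (le_abs_self _).trans this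

lemma theta1_testF (d r n m : ℕ) [NeZero n] (hd : 2 ≤ d) (A : ℝ) (hA : 0 < A)
    (e : (Fin d → ZMod n) → ℝ)
    (he : ∀ u : Fin m → Fin d → ZMod n → ℝ,
        ((n : ℝ) ^ d) / 40 ≤ ∑ k, |e k - ∑ s, ∏ i, u s i (k i)|)
    (hmem : testF d n A e ∈ Wmix d r) :
    A * ((expNegInvGlue (1 / 2) * (2 * Real.pi / 3)) ^ d / 40) ≤
    theta1 d m (volume.restrict (Set.univ.pi fun _ => Set.Icc (-Real.pi) Real.pi))
      (testF d n A e) := by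
  have hn : (0 : ℝ) < n := by exact_mod_cast Nat.pos_of_ne_zero (NeZero.ne n)
  have hδ : 0 < expNegInvGlue (1 / 2) := expNegInvGlue.pos_of_pos (by norm_num)
  set δ := expNegInvGlue (1 / 2) with hδd
  refine le_csInf ?_ ?_
  · refine ⟨_, fun _ _ _ => 0, fun _ _ => measurable_const, ?_, rfl⟩
    have : Nonempty (Fin d) := ⟨⟨0, by omega⟩⟩
    have hz : (∑ _s : Fin m, ∏ _i : Fin d, (0 : ℝ)) = 0 := by
      simp; omega
    simp only [hz]; exact integrable_zero (Fin d → ℝ) ℝ _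
  · rintro _ ⟨u, _, hu, rfl⟩
    have hint : IntegrableOn (fun x => |testF d n A e x - ∑ s, ∏ i, u s i (x i)|)
        (Set.univ.pi fun _ => Set.Icc (-Real.pi) Real.pi) :=
      ((Wmix_integrable hmem).sub hu).abs
    have key := aux_integral d n _ (fun _ => abs_nonneg _) hint (A * δ ^ d * ((n : ℝ) ^ d / 40)) (by
      intro t ht
      set P : ℝ := ∏ i, PhiB (n * (t i + Real.pi)) with hP
      have hPδ : δ ^ d ≤ P := by
        calc δ ^ d = ∏ i : Fin d, δ := by simp
          _ ≤ P := Finset.prod_le_prod (fun _ _ => hδ.le) fun i _ => PhiB_lower n _ (ht i).1 (ht i).2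
      have hP0 : 0 < P := lt_of_lt_of_le (by positivity) hPδ
      have h := aux_tensor_scaled hd e he (A * P) (by positivity)
        (fun s i j => u s i (t i + tauB n j))
      refine le_trans ?_ (h.trans (le_of_eq ?_))
      · gcongr
      · refine Finset.sum_congr rfl fun k _ => ?_
        simp only [testF, baseF, Pi.add_apply, PhiB_shift, ← hP]
        have : (fun i => idxB n (t i + tauB n (k i))) = k :=
          funext fun i => idxB_shift n (k i) (t i) (ht i).1 (ht i).2
        rw [this]
        ring_nf)
    refine le_trans (le_of_eq ?_) key
    rw [mul_pow, div_pow, div_pow, mul_pow 3 (n : ℝ)]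
    field_simp

/-- Lower bound for classes of dominated mixed smoothness:
`Θ_m(W, L₁[-π,π]^d) ≥ c(r,d) m^{-rd/(d-1)}`. -/
theorem theta_mixed_smoothness_lower (d r : ℕ) (hd : 2 ≤ d) (hr : 1 ≤ r) :
    ∃ c : ℝ, 0 < c ∧ ∀ m : ℕ, 1 ≤ m →
      c * (m : ℝ) ^ (-((r : ℝ) * (d : ℝ)) / ((d : ℝ) - 1)) ≤
        ⨆ f ∈ Wmix d r,
          theta1 d m (volume.restrict (Set.univ.pi fun _ => Set.Icc (-Real.pi) Real.pi)) f := by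
  obtain ⟨Q, hQ, hT⟩ := aux_tensor d hd
  obtain ⟨B, hB, hBr⟩ := PhiB_bound r
  have hδ : 0 < expNegInvGlue (1 / 2) := expNegInvGlue.pos_of_pos (by norm_num)
  have hpi := Real.pi_pos
  have hd0 : 0 < d := by omega
  have hQd : 1 ≤ Q * d := Nat.mul_pos hQ hd0
  set S : ℝ := (expNegInvGlue (1 / 2) * (2 * Real.pi / 3)) ^ d / 40 with hS
  have hS0 : 0 < S := by positivity
  have hQR : (0 : ℝ) < Q := by exact_mod_cast hQ
  have hdR : (2 : ℝ) ≤ d := by exact_mod_cast hd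
  refine ⟨(B ^ d)⁻¹ * ((2 * Q * d : ℝ) ^ (r * d))⁻¹ * S, by positivity, fun m hm => ?_⟩
  have hm1 : (1 : ℝ) ≤ m := by exact_mod_cast hm
  set y : ℝ := (m : ℝ) ^ (1 / ((d : ℝ) - 1)) with hy
  have hd1 : (0 : ℝ) < (d : ℝ) - 1 := by linarith
  have hy1 : 1 ≤ y := Real.one_le_rpow hm1 (by positivity)
  have hyd : y ^ (d - 1) = m := by
    rw [hy, ← Real.rpow_natCast, ← Real.rpow_mul (by positivity), Nat.cast_sub (by omega)]
    have : 1 / ((d : ℝ) - 1) * ((d : ℝ) - (1 : ℕ)) = 1 := by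
      push_cast; field_simp
    rw [this, Real.rpow_one]
  have hmy : (m : ℝ) ^ (-((r : ℝ) * (d : ℝ)) / ((d : ℝ) - 1)) = (y ^ (r * d))⁻¹ := by
    rw [hy, ← Real.rpow_natCast, ← Real.rpow_mul (by positivity), ← Real.rpow_neg (by positivity)]
    congr 1
    push_cast
    ring
  set q : ℕ := ⌈y⌉₊ with hq
  have hyq : y ≤ q := Nat.le_ceil y
  have hq2 : (q : ℝ) ≤ 2 * y := by
    have := Nat.ceil_lt_add_one (show 0 ≤ y by linarith)
    linarith
  have hq0 : 0 < q := by
    have : (0 : ℝ) < q := by linarith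
    exact_mod_cast this
  have hmq : m ≤ q ^ (d - 1) := by
    have : (m : ℝ) ≤ (q : ℝ) ^ (d - 1) := by
      rw [← hyd]; gcongr
    exact_mod_cast this
  let n : ℕ := Q * d * q
  have hn0 : n ≠ 0 := by positivity
  haveI : NeZero n := ⟨hn0⟩
  have hcond : Q * d * m ≤ n ^ (d - 1) := by
    calc Q * d * m ≤ (Q * d) ^ (d - 1) * q ^ (d - 1) :=
          Nat.mul_le_mul (Nat.le_self_pow (by omega) _) hmq
      _ = _ := by rw [← mul_pow]
  obtain ⟨e, he, heu⟩ := hT n m hm hcond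
  have hmem := testF_mem d r n B hB hBr e he
  have hnR : (0 : ℝ) < n := by exact_mod_cast Nat.pos_of_ne_zero hn0
  have hlow := theta1_testF d r n m hd _ (by positivity) e heu hmem
  rw [← hS] at hlow
  have hn2 : (n : ℝ) ≤ 2 * Q * d * y := by
    have : (n : ℝ) = Q * d * q := by simp [n]
    rw [this]
    calc (Q * d * q : ℝ) ≤ Q * d * (2 * y) := by gcongr
      _ = _ := by ring
  have hfinal : (B ^ d)⁻¹ * ((2 * Q * d : ℝ) ^ (r * d))⁻¹ * S *
      (m : ℝ) ^ (-((r : ℝ) * (d : ℝ)) / ((d : ℝ) - 1)) ≤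
      (B ^ d)⁻¹ * ((n : ℝ) ^ (r * d))⁻¹ * S := by
    rw [hmy]
    have h1 : ((2 * Q * d : ℝ) ^ (r * d))⁻¹ * (y ^ (r * d))⁻¹ ≤ ((n : ℝ) ^ (r * d))⁻¹ := by
      rw [← mul_inv, ← mul_pow]
      gcongr
    calc _ = (B ^ d)⁻¹ * (((2 * Q * d : ℝ) ^ (r * d))⁻¹ * (y ^ (r * d))⁻¹) * S := by ring
      _ ≤ _ := by gcongr
  refine hfinal.trans (hlow.trans ?_)
  have hbdd : BddAbove (Set.range fun f : (Fin d → ℝ) → ℝ => ⨆ (_ : f ∈ Wmix d r),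
      theta1 d m (volume.restrict (Set.univ.pi fun _ => Set.Icc (-Real.pi) Real.pi)) f) := by
    refine ⟨volume.real (Set.univ.pi fun _ : Fin d => Set.Icc (-Real.pi) Real.pi), ?_⟩
    rintro _ ⟨f, rfl⟩
    exact Real.iSup_le (fun hf => theta1_le hd0 hf) measureReal_nonneg
  refine le_trans (le_of_eq ?_) (le_ciSup hbdd (testF d n ((B ^ d)⁻¹ * ((n : ℝ) ^ (r * d))⁻¹) e))
  exact (ciSup_pos (f := fun _ => theta1 d m (volume.restrict (Set.univ.pi fun _ =>
    Set.Icc (-Real.pi) Real.pi)) (testF d n ((B ^ d)⁻¹ * ((n : ℝ) ^ (r * d))⁻¹) e)) hmem).symm
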